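/- Let (X,d) be a proper complete separable metric space with base point x0 and let f: X -> X be continuous such that the pushforward f_* is a w_1-continuous self-map of P_1(X). Suppose there are m > 0 and R >= 0 with f^m(X) contained in the closed ball B_R(x0). Then the image f_*^m(P_1(X)) is relatively compact in (P_1(X), w_1); consequently every closed subset of (P_1(X), w_1) is f_*-admissible. -/

import Mathlib

open MeasureTheory Topology Filter Metric Set
open scoped ENNReal NNReal

noncomputable section

variable {X : Type*}

/-- `π` is a coupling of `μ` and `ν`, i.e. a measure on `X × X` with marginals `μ` and `ν`. -/
def IsCoupling [MeasurableSpace X] (π : Measure (X × X)) (μ ν : Measure X) : Prop :=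
  π.map Prod.fst = μ ∧ π.map Prod.snd = ν

/-- The `p`-th power optimal transport cost between `μ` and `ν`. -/
def wCost [MetricSpace X] [MeasurableSpace X] (p : ℝ) (μ ν : Measure X) : ℝ≥0∞ :=
  ⨅ π ∈ {π : Measure (X × X) | IsProbabilityMeasure π ∧ IsCoupling π μ ν},
    ∫⁻ q, ENNReal.ofReal (dist q.1 q.2 ^ p) ∂π

/-- The Wasserstein distance of order `p` (the `p`-th root of the optimal cost), as a real
number. -/
def Wp [MetricSpace X] [MeasurableSpace X] (p : ℝ) (μ ν : Measure X) : ℝ :=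
  ((wCost p μ ν) ^ (1 / p)).toReal

/-- `μ` has finite `p`-th moment about the base point `x₀`. -/
def FiniteMoment [MetricSpace X] [MeasurableSpace X] (p : ℝ) (x₀ : X) (μ : Measure X) : Prop :=
  ∫⁻ x, ENNReal.ofReal (dist x₀ x ^ p) ∂μ < ⊤

/-- The Wasserstein space `P_p(X)`: Borel probability measures with finite `p`-th moment. -/
def Pp [MetricSpace X] [MeasurableSpace X] (p : ℝ) (x₀ : X) : Set (Measure X) :=
  {μ | IsProbabilityMeasure μ ∧ FiniteMoment p x₀ μ}

/-- The convex combination `t • μ + (1 - t) • ν` of two measures. -/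
def mix [MeasurableSpace X] (t : ℝ) (μ ν : Measure X) : Measure X :=
  ENNReal.ofReal t • μ + ENNReal.ofReal (1 - t) • ν

/-- `μₙ → μ` in the weak topology: integrals of bounded continuous functions converge. -/
def WeakConv [MeasurableSpace X] [TopologicalSpace X] (μs : ℕ → Measure X) (μ : Measure X) :
    Prop :=
  ∀ g : BoundedContinuousFunction X ℝ,
    Tendsto (fun n => ∫ x, g x ∂(μs n)) atTop (𝓝 (∫ x, g x ∂μ))

/-- `μₙ → μ` with respect to the Wasserstein distance of order `p`. -/
def WpTendsto [MetricSpace X] [MeasurableSpace X] (p : ℝ) (μs : ℕ → Measure X)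
    (μ : Measure X) : Prop :=
  Tendsto (fun n => Wp p (μs n) μ) atTop (𝓝 0)

/-- A set of measures is sequentially compact for the Wasserstein distance of order `p`. -/
def WpSeqCompact [MetricSpace X] [MeasurableSpace X] (p : ℝ) (S : Set (Measure X)) : Prop :=
  ∀ μs : ℕ → Measure X, (∀ n, μs n ∈ S) →
    ∃ μ ∈ S, ∃ φ : ℕ → ℕ, StrictMono φ ∧ WpTendsto p (fun n => μs (φ n)) μ

/-- A set of measures is sequentially compact for the weak topology. -/
def WeakSeqCompact [MeasurableSpace X] [TopologicalSpace X] (S : Set (Measure X)) : Prop :=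
  ∀ μs : ℕ → Measure X, (∀ n, μs n ∈ S) →
    ∃ μ ∈ S, ∃ φ : ℕ → ℕ, StrictMono φ ∧ WeakConv (fun n => μs (φ n)) μ

/-- A set `N ⊆ P_p(X)` is admissible for a sequence of maps `F n` on measures: whenever
orbit segments `F n^[0..m n] (μs n)` stay in `N` with `m n → ∞`, the endpoints have a
subsequence converging in `(P_p(X), w_p)`. -/
def WpSeqAdmissible [MetricSpace X] [MeasurableSpace X] (p : ℝ) (x₀ : X)
    (F : ℕ → Measure X → Measure X) (N : Set (Measure X)) : Prop :=
  ∀ (μs : ℕ → Measure X) (m : ℕ → ℕ), Tendsto m atTop atTop →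
    (∀ n, ∀ k ≤ m n, (F n)^[k] (μs n) ∈ N) →
    ∃ μ ∈ Pp p x₀, ∃ φ : ℕ → ℕ, StrictMono φ ∧
      WpTendsto p (fun j => (F (φ j))^[m (φ j)] (μs (φ j))) μ

/-- A set `N ⊆ P_p(X)` is `F`-admissible. -/
def WpAdmissible [MetricSpace X] [MeasurableSpace X] (p : ℝ) (x₀ : X)
    (F : Measure X → Measure X) (N : Set (Measure X)) : Prop :=
  WpSeqAdmissible p x₀ (fun _ => F) N

/-- A subset of `P_p(X)` that is (sequentially) closed in `(P_p(X), w_p)`. -/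
def WpClosed [MetricSpace X] [MeasurableSpace X] (p : ℝ) (x₀ : X)
    (N : Set (Measure X)) : Prop :=
  N ⊆ Pp p x₀ ∧ ∀ (μs : ℕ → Measure X) (μ : Measure X), (∀ n, μs n ∈ N) →
    μ ∈ Pp p x₀ → WpTendsto p μs μ → μ ∈ N

/-- A subset of `P_p(X)` that is bounded for `w_p`. -/
def WpBounded [MetricSpace X] [MeasurableSpace X] (p : ℝ) (x₀ : X)
    (N : Set (Measure X)) : Prop :=
  ∃ R : ℝ, ∀ μ ∈ N, Wp p μ (Measure.dirac x₀) ≤ R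

/-- The (sequential) closure of a subset of `P_p(X)` in `(P_p(X), w_p)`. -/
def WpClosure [MetricSpace X] [MeasurableSpace X] (p : ℝ) (x₀ : X)
    (S : Set (Measure X)) : Set (Measure X) :=
  {μ | μ ∈ Pp p x₀ ∧ ∃ μs : ℕ → Measure X, (∀ n, μs n ∈ S) ∧ WpTendsto p μs μ}

/-!
All measures in `f_*^m(P_p(X))` are carried by one compact set `K`, and by compactness of the space
of probability measures on `K` any sequence of them has a weakly convergent subsequence. On a
compact space weak convergence implies `w_p`-convergence: split both measures along a finite
partition of unity `ψ i` with supports of small diameter, and couple the parts over each `ψ i` by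
a multiple of their product, as far as their masses agree. Points coupled in this way are close,
and the mass left over is `1 - ∑ i, min (∫ ψ i ∂μₙ) (∫ ψ i ∂μ)`, which tends to `0`.
Admissibility follows because an orbit segment of length at least `m` ends in `f_*^m(P_p(X))`.
-/

section Coupling

variable [MeasurableSpace X] {μ ν : Measure X}

/-- The largest multiple of the product measure `μ ⊗ ν` whose marginals are bounded by `μ` and `ν`,
for finite measures `μ` and `ν`. It is a coupling as soon as the masses agree. The inverse in the
normalization is `⊤` if `μ = ν = 0`, which is harmless as the product then vanishes. -/
def scaledProd (μ ν : Measure X) : Measure (X × X) :=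
  (max (μ univ) (ν univ))⁻¹ • μ.prod ν

lemma map_fst_scaledProd_le [SFinite ν] : (scaledProd μ ν).map Prod.fst ≤ μ := by
  have hmass : (max (μ univ) (ν univ))⁻¹ * ν univ ≤ 1 := by
    rw [mul_comm, ← div_eq_mul_inv]
    exact ENNReal.div_le_of_le_mul (by simp)
  rw [scaledProd, Measure.map_smul, Measure.map_fst_prod, smul_smul]
  exact fun s => mul_le_of_le_one_left zero_le hmass

lemma map_snd_scaledProd_le [SFinite ν] : (scaledProd μ ν).map Prod.snd ≤ ν := by
  have hmass : (max (μ univ) (ν univ))⁻¹ * μ univ ≤ 1 := by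
    rw [mul_comm, ← div_eq_mul_inv]
    exact ENNReal.div_le_of_le_mul (by simp)
  rw [scaledProd, Measure.map_smul, Measure.map_snd_prod, smul_smul]
  exact fun s => mul_le_of_le_one_left zero_le hmass

lemma scaledProd_univ [IsFiniteMeasure μ] [IsFiniteMeasure ν] :
    scaledProd μ ν univ = min (μ univ) (ν univ) := by
  have hmax : max (μ univ) (ν univ) ≠ ⊤ := by simp
  have hmin (h : max (μ univ) (ν univ) = 0) : min (μ univ) (ν univ) = 0 :=
    le_antisymm (min_le_max.trans h.le) zero_le
  rw [scaledProd, Measure.smul_apply, smul_eq_mul, ← univ_prod_univ, Measure.prod_prod,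
    ← max_mul_min (μ univ), ENNReal.inv_mul_cancel_left' hmin fun h => absurd h hmax]

lemma scaledProd_absolutelyContinuous : scaledProd μ ν ≪ μ.prod ν :=
  Measure.smul_absolutelyContinuous

lemma isCoupling_scaledProd [IsFiniteMeasure μ] [IsFiniteMeasure ν] (h : μ univ = ν univ) :
    IsCoupling (scaledProd μ ν) μ ν := by
  have : IsFiniteMeasure (scaledProd μ ν) := ⟨by simp [scaledProd_univ]⟩
  constructor
  · refine Measure.eq_of_le_of_measure_univ_eq map_fst_scaledProd_le ?_
    simp [Measure.map_apply measurable_fst, scaledProd_univ, h]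
  · refine Measure.eq_of_le_of_measure_univ_eq map_snd_scaledProd_le ?_
    simp [Measure.map_apply measurable_snd, scaledProd_univ, h]

lemma exists_isCoupling_add [IsFiniteMeasure μ] [IsFiniteMeasure ν] (h : μ univ = ν univ)
    {π : Measure (X × X)} (hfst : π.map Prod.fst ≤ μ) (hsnd : π.map Prod.snd ≤ ν) :
    ∃ ρ, IsCoupling (π + ρ) μ ν := by
  have : IsFiniteMeasure (π.map Prod.fst) := isFiniteMeasure_of_le μ hfst
  have : IsFiniteMeasure (π.map Prod.snd) := isFiniteMeasure_of_le ν hsnd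
  have hrem : (μ - π.map Prod.fst) univ = (ν - π.map Prod.snd) univ := by
    rw [Measure.sub_apply .univ hfst, Measure.sub_apply .univ hsnd, h,
      Measure.map_apply measurable_fst .univ, Measure.map_apply measurable_snd .univ,
      preimage_univ, preimage_univ]
  obtain ⟨hρfst, hρsnd⟩ := isCoupling_scaledProd hrem
  refine ⟨scaledProd (μ - π.map Prod.fst) (ν - π.map Prod.snd), ?_, ?_⟩
  · rw [Measure.map_add _ _ measurable_fst, hρfst, add_comm, Measure.sub_add_cancel_of_le hfst]
  · rw [Measure.map_add _ _ measurable_snd, hρsnd, add_comm, Measure.sub_add_cancel_of_le hsnd]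

lemma IsCoupling.measure_univ {π : Measure (X × X)} (h : IsCoupling π μ ν) :
    π univ = μ univ := by
  rw [← h.1, Measure.map_apply measurable_fst .univ, preimage_univ]

end Coupling

section TransportCost

variable [MetricSpace X] [MeasurableSpace X] {p : ℝ} {μ ν : Measure X}

lemma wCost_le_lintegral [IsProbabilityMeasure μ] {π : Measure (X × X)} (h : IsCoupling π μ ν) :
    wCost p μ ν ≤ ∫⁻ q, ENNReal.ofReal (dist q.1 q.2 ^ p) ∂π :=
  iInf₂_le π ⟨⟨h.measure_univ.trans measure_univ⟩, h⟩

lemma wCost_le_lintegral_add [IsProbabilityMeasure μ] [IsProbabilityMeasure ν] (hp : 0 ≤ p)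
    {D : ℝ} (hD : ∀ x y : X, dist x y ≤ D) {π : Measure (X × X)}
    (hfst : π.map Prod.fst ≤ μ) (hsnd : π.map Prod.snd ≤ ν) :
    wCost p μ ν ≤ ∫⁻ q, ENNReal.ofReal (dist q.1 q.2 ^ p) ∂π +
      ENNReal.ofReal (D ^ p) * (1 - π univ) := by
  obtain ⟨ρ, hρ⟩ := exists_isCoupling_add (by simp) hfst hsnd
  have hmass : π univ + ρ univ = 1 := by
    rw [← Measure.add_apply, hρ.measure_univ, measure_univ]
  have hπ : π univ ≠ ⊤ := ne_top_of_le_ne_top ENNReal.one_ne_top (hmass ▸ le_self_add)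
  calc wCost p μ ν
      ≤ ∫⁻ q, ENNReal.ofReal (dist q.1 q.2 ^ p) ∂(π + ρ) := wCost_le_lintegral hρ
    _ = ∫⁻ q, ENNReal.ofReal (dist q.1 q.2 ^ p) ∂π +
          ∫⁻ q, ENNReal.ofReal (dist q.1 q.2 ^ p) ∂ρ := lintegral_add_measure _ _ _
    _ ≤ ∫⁻ q, ENNReal.ofReal (dist q.1 q.2 ^ p) ∂π + ∫⁻ _, ENNReal.ofReal (D ^ p) ∂ρ := by
        gcongr with q
        exact hD q.1 q.2
    _ = _ := by rw [lintegral_const, ← hmass, ENNReal.add_sub_cancel_left hπ]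

lemma wCost_sum_le {ι : Type*} [Fintype ι] {μ ν : ι → Measure X}
    [IsProbabilityMeasure (∑ i, μ i)] [IsProbabilityMeasure (∑ i, ν i)] (hp : 0 ≤ p) {ε D : ℝ}
    (hD : ∀ x y : X, dist x y ≤ D)
    (hε : ∀ i, ∀ᵐ q ∂(μ i).prod (ν i), dist q.1 q.2 ≤ ε) :
    wCost p (∑ i, μ i) (∑ i, ν i) ≤ ENNReal.ofReal (ε ^ p) +
      ENNReal.ofReal (D ^ p) * (1 - ∑ i, min (μ i univ) (ν i univ)) := by
  have (i : ι) : IsFiniteMeasure (μ i) := isFiniteMeasure_of_le (∑ i, μ i)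
    (Finset.single_le_sum (fun _ _ => Measure.zero_le _) (Finset.mem_univ i))
  have (i : ι) : IsFiniteMeasure (ν i) := isFiniteMeasure_of_le (∑ i, ν i)
    (Finset.single_le_sum (fun _ _ => Measure.zero_le _) (Finset.mem_univ i))
  set π : Measure (X × X) := ∑ i, scaledProd (μ i) (ν i) with hπ
  have hfst : π.map Prod.fst ≤ ∑ i, μ i := by
    rw [hπ, Measure.map_finset_sum' (by fun_prop)]
    exact Finset.sum_le_sum fun i _ => map_fst_scaledProd_le
  have hsnd : π.map Prod.snd ≤ ∑ i, ν i := by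
    rw [hπ, Measure.map_finset_sum' (by fun_prop)]
    exact Finset.sum_le_sum fun i _ => map_snd_scaledProd_le
  have hmass : π univ = ∑ i, min (μ i univ) (ν i univ) := by
    simp [hπ, Measure.finsetSum_apply, scaledProd_univ]
  have hmass_le : π univ ≤ 1 := by
    rw [← measure_univ (μ := ∑ i, μ i)]
    simpa [Measure.map_apply measurable_fst] using hfst univ
  have hnear : ∀ᵐ q ∂π, ENNReal.ofReal (dist q.1 q.2 ^ p) ≤ ENNReal.ofReal (ε ^ p) := by
    simp only [hπ, ae_finsetSum_measure_iff, Finset.mem_univ, true_imp_iff]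
    intro i
    filter_upwards [scaledProd_absolutelyContinuous.ae_le (hε i)] with q hq
    gcongr
  refine (wCost_le_lintegral_add hp hD hfst hsnd).trans ?_
  rw [hmass]
  gcongr
  calc ∫⁻ q, ENNReal.ofReal (dist q.1 q.2 ^ p) ∂π
      ≤ ∫⁻ _, ENNReal.ofReal (ε ^ p) ∂π := lintegral_mono_ae hnear
    _ = ENNReal.ofReal (ε ^ p) * π univ := lintegral_const _
    _ ≤ ENNReal.ofReal (ε ^ p) := mul_le_of_le_one_right zero_le hmass_le

lemma sum_withDensity_eq_self {α ι : Type*} [MeasurableSpace α] [Fintype ι] {ψ : ι → α → ℝ≥0∞}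
    (hψ : ∀ i, Measurable (ψ i)) (hsum : ∀ x, ∑ i, ψ i x = 1) (μ : Measure α) :
    ∑ i, μ.withDensity (ψ i) = μ := by
  ext s hs
  simp [Measure.finsetSum_apply, withDensity_apply _ hs, ← lintegral_finsetSum _ fun i _ => hψ i,
    hsum]

lemma wCost_le_of_partition [IsProbabilityMeasure μ] [IsProbabilityMeasure ν] (hp : 0 ≤ p)
    {ι : Type*} [Fintype ι] {ψ : ι → X → ℝ≥0∞} (hψ : ∀ i, Measurable (ψ i))
    (hsum : ∀ x, ∑ i, ψ i x = 1) {ε D : ℝ}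
    (hε : ∀ i x y, ψ i x ≠ 0 → ψ i y ≠ 0 → dist x y ≤ ε) (hD : ∀ x y : X, dist x y ≤ D) :
    wCost p μ ν ≤ ENNReal.ofReal (ε ^ p) +
      ENNReal.ofReal (D ^ p) * (1 - ∑ i, min (∫⁻ x, ψ i x ∂μ) (∫⁻ x, ψ i x ∂ν)) := by
  have hsupp (ξ : Measure X) (i : ι) : ∀ᵐ x ∂ξ.withDensity (ψ i), ψ i x ≠ 0 :=
    (ae_withDensity_iff (hψ i)).2 (Eventually.of_forall fun _ => id)
  have hμ := sum_withDensity_eq_self hψ hsum μ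
  have hν := sum_withDensity_eq_self hψ hsum ν
  have : IsProbabilityMeasure (∑ i, μ.withDensity (ψ i)) := by rwa [hμ]
  have : IsProbabilityMeasure (∑ i, ν.withDensity (ψ i)) := by rwa [hν]
  have hdist (i : ι) :
      ∀ᵐ q ∂(μ.withDensity (ψ i)).prod (ν.withDensity (ψ i)), dist q.1 q.2 ≤ ε := by
    filter_upwards [Measure.quasiMeasurePreserving_fst.ae (hsupp μ i),
      Measure.quasiMeasurePreserving_snd.ae (hsupp ν i)] with q hq₁ hq₂
    exact hε i q.1 q.2 hq₁ hq₂
  simpa only [hμ, hν, withDensity_apply _ MeasurableSet.univ, Measure.restrict_univ] using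
    wCost_sum_le hp hD hdist

lemma wCost_map_le_of_isometry {Y : Type*} [MetricSpace Y] [MeasurableSpace Y] {g : X → Y}
    (hg : Isometry g) (hgm : Measurable g) :
    wCost p (μ.map g) (ν.map g) ≤ wCost p μ ν := by
  refine le_iInf₂ fun π ⟨hπ, hfst, hsnd⟩ => ?_
  have hgg : Measurable (Prod.map g g) := hgm.prodMap hgm
  have hcoupling : IsCoupling (π.map (Prod.map g g)) (μ.map g) (ν.map g) := by
    constructor
    · rw [Measure.map_map measurable_fst hgg, ← hfst, Measure.map_map hgm measurable_fst]
      rfl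
    · rw [Measure.map_map measurable_snd hgg, ← hsnd, Measure.map_map hgm measurable_snd]
      rfl
  have : IsProbabilityMeasure μ := hfst ▸ Measure.isProbabilityMeasure_map (by fun_prop)
  have : IsProbabilityMeasure (μ.map g) := Measure.isProbabilityMeasure_map (by fun_prop)
  calc wCost p (μ.map g) (ν.map g)
      ≤ ∫⁻ q, ENNReal.ofReal (dist q.1 q.2 ^ p) ∂π.map (Prod.map g g) :=
        wCost_le_lintegral hcoupling
    _ ≤ ∫⁻ q, ENNReal.ofReal (dist (g q.1) (g q.2) ^ p) ∂π := lintegral_map_le _ _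
    _ = ∫⁻ q, ENNReal.ofReal (dist q.1 q.2 ^ p) ∂π := by simp only [hg.dist_eq]

end TransportCost

section WeakConvergence

lemma exists_finite_partition_dist_le [PseudoMetricSpace X] [CompactSpace X] {ε : ℝ} (hε : 0 < ε) :
    ∃ (t : Finset X) (ψ : t → BoundedContinuousFunction X ℝ≥0),
      (∀ x, ∑ i, ψ i x = 1) ∧ ∀ i x y, ψ i x ≠ 0 → ψ i y ≠ 0 → dist x y ≤ ε := by
  obtain ⟨t, -, ht⟩ := (isCompact_univ (X := X)).elim_nhds_subcover (ball · (ε / 2))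
    fun x _ => ball_mem_nhds x (half_pos hε)
  obtain ⟨φ, hφ⟩ := PartitionOfUnity.exists_isSubordinate isClosed_univ
    (fun i : t => ball (i : X) (ε / 2)) (fun _ => isOpen_ball) (by simpa [iUnion_subtype] using ht)
  have hmem (i : t) (x : X) (hx : (φ i x).toNNReal ≠ 0) : dist x i < ε / 2 :=
    hφ i (subset_tsupport _ fun h => hx (by simp [h]))
  refine ⟨t, fun i => .mkOfCompact ⟨fun x => (φ i x).toNNReal, by fun_prop⟩, fun x => ?_,
    fun i x y hx hy => ?_⟩
  · have hsum := φ.sum_eq_one (mem_univ x)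
    rw [finsum_eq_sum_of_fintype] at hsum
    exact (Real.toNNReal_sum_of_nonneg fun i _ => φ.nonneg i x).symm.trans
      (by rw [hsum, Real.toNNReal_one])
  · linarith [dist_triangle_right x y i, hmem i x hx, hmem i y hy]

lemma tendsto_sum_min_lintegral [TopologicalSpace X] [MeasurableSpace X] [OpensMeasurableSpace X]
    {ι α : Type*} [Fintype ι] {ψ : ι → BoundedContinuousFunction X ℝ≥0}
    (hψ : ∀ x, ∑ i, ψ i x = 1) {l : Filter α} {μs : α → ProbabilityMeasure X}
    {μ : ProbabilityMeasure X} (h : Tendsto μs l (𝓝 μ)) :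
    Tendsto (fun a => ∑ i, min (∫⁻ x, ψ i x ∂(μs a : Measure X)) (∫⁻ x, ψ i x ∂(μ : Measure X)))
      l (𝓝 1) := by
  have hsum : ∑ i, ∫⁻ x, ψ i x ∂(μ : Measure X) = 1 := by
    rw [← lintegral_finsetSum _ fun i _ => by fun_prop]
    simp [← ENNReal.ofNNReal_finsetSum, hψ]
  rw [← hsum]
  refine tendsto_finsetSum _ fun i _ => ?_
  have hi := ProbabilityMeasure.tendsto_iff_forall_lintegral_tendsto.1 h (ψ i)
  simpa only [min_self] using hi.min (tendsto_const_nhds (x := ∫⁻ x, ψ i x ∂(μ : Measure X)))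

lemma tendsto_wCost_of_tendsto [MetricSpace X] [CompactSpace X] [MeasurableSpace X] [BorelSpace X]
    {p : ℝ} (hp : 0 < p) {α : Type*} {l : Filter α} {μs : α → ProbabilityMeasure X}
    {μ : ProbabilityMeasure X} (h : Tendsto μs l (𝓝 μ)) :
    Tendsto (fun a => wCost p (μs a : Measure X) μ) l (𝓝 0) := by
  refine tendsto_order.2 ⟨fun _ hb => absurd hb not_lt_zero, fun b hb => ?_⟩
  obtain ⟨ε, hεb, hε⟩ : ∃ ε : ℝ, ENNReal.ofReal (ε ^ p) < b ∧ 0 < ε := by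
    have hlim : Tendsto (fun ε : ℝ => ENNReal.ofReal (ε ^ p)) (𝓝[>] 0) (𝓝 0) := by
      have := ENNReal.continuous_ofReal.tendsto' _ _ ENNReal.ofReal_zero |>.comp
        ((Real.continuous_rpow_const hp.le).tendsto' 0 0 (Real.zero_rpow hp.ne'))
      exact this.mono_left nhdsWithin_le_nhds
    exact ((hlim.eventually_lt_const hb).and self_mem_nhdsWithin).exists
  obtain ⟨t, ψ, hsum, hψε⟩ := exists_finite_partition_dist_le (X := X) hε
  set D := diam (univ : Set X)
  have hbound (a : α) := wCost_le_of_partition (μ := μs a) (ν := μ) hp.le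
    (ψ := fun i x => ψ i x) (fun i => by fun_prop) (fun x => mod_cast hsum x)
    (fun i x y hx hy => hψε i x y (mod_cast hx) (mod_cast hy))
    fun x y => dist_le_diam_of_mem isCompact_univ.isBounded (mem_univ x) (mem_univ y)
  have hlim : Tendsto (fun a => ENNReal.ofReal (ε ^ p) + ENNReal.ofReal (D ^ p) *
      (1 - ∑ i, min (∫⁻ x, ψ i x ∂(μs a : Measure X)) (∫⁻ x, ψ i x ∂(μ : Measure X)))) l
      (𝓝 (ENNReal.ofReal (ε ^ p))) := by
    have hexcess := ENNReal.Tendsto.sub tendsto_const_nhds (tendsto_sum_min_lintegral hsum h)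
      (.inl ENNReal.one_ne_top)
    simpa using (ENNReal.Tendsto.const_mul (a := ENNReal.ofReal (D ^ p)) hexcess
      (.inr ENNReal.ofReal_ne_top)).const_add (ENNReal.ofReal (ε ^ p))
  filter_upwards [hlim.eventually_lt_const hεb] with a ha
  exact (hbound a).trans_lt ha

end WeakConvergence

section RelativeCompactness

variable [MetricSpace X] [MeasurableSpace X] {p : ℝ} {x₀ : X}

/-- Relative compactness in `(P_p(X), w_p)`, in sequential form: every sequence in `S` has a
subsequence converging to a point of `P_p(X)`. The set `S` is not required to lie in `P_p(X)`. -/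
def WpRelSeqCompact (p : ℝ) (x₀ : X) (S : Set (Measure X)) : Prop :=
  ∀ μs : ℕ → Measure X, (∀ n, μs n ∈ S) →
    ∃ μ ∈ Pp p x₀, ∃ φ : ℕ → ℕ, StrictMono φ ∧ WpTendsto p (fun j => μs (φ j)) μ

lemma WpRelSeqCompact.mono {S T : Set (Measure X)} (hT : WpRelSeqCompact p x₀ T) (h : S ⊆ T) :
    WpRelSeqCompact p x₀ S :=
  fun μs hμs => hT μs fun n => h (hμs n)

lemma wpTendsto_of_tendsto_wCost (hp : 0 < p) {μs : ℕ → Measure X} {μ : Measure X}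
    (h : Tendsto (fun n => wCost p (μs n) μ) atTop (𝓝 0)) : WpTendsto p μs μ := by
  have hroot : Tendsto (fun n => wCost p (μs n) μ ^ (1 / p)) atTop (𝓝 0) := by
    simpa [hp] using h.ennrpow_const (1 / p)
  exact (ENNReal.tendsto_toReal ENNReal.zero_ne_top).comp hroot

lemma mem_Pp_of_ae_mem_isBounded (hp : 0 ≤ p) {μ : Measure X} [IsProbabilityMeasure μ] {S : Set X}
    (hS : Bornology.IsBounded S) (hμ : ∀ᵐ x ∂μ, x ∈ S) : μ ∈ Pp p x₀ := by
  obtain ⟨R, hR⟩ := hS.subset_closedBall x₀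
  refine ⟨inferInstance, ?_⟩
  calc ∫⁻ x, ENNReal.ofReal (dist x₀ x ^ p) ∂μ
      ≤ ∫⁻ _, ENNReal.ofReal (R ^ p) ∂μ := by
        refine lintegral_mono_ae ?_
        filter_upwards [hμ] with x hx
        gcongr
        exact mem_closedBall'.1 (hR hx)
    _ < ⊤ := by simp

lemma wpRelSeqCompact_setOf_ae_mem [BorelSpace X] (hp : 0 < p) {K : Set X} (hK : IsCompact K) :
    WpRelSeqCompact p x₀ {μ | IsProbabilityMeasure μ ∧ ∀ᵐ x ∂μ, x ∈ K} := by
  intro μs hμs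
  have : CompactSpace K := isCompact_iff_compactSpace.1 hK
  have hemb : MeasurableEmbedding (Subtype.val : K → X) := .subtype_coe hK.measurableSet
  let νs (n : ℕ) : ProbabilityMeasure K :=
    have := (hμs n).1
    ⟨(μs n).comap Subtype.val, hemb.isProbabilityMeasure_comap (by simpa using (hμs n).2)⟩
  have hνs (n : ℕ) : (νs n : Measure K).map Subtype.val = μs n :=
    (map_comap_subtype_coe hK.measurableSet _).trans
      (Measure.restrict_eq_self_of_ae_mem (hμs n).2)
  obtain ⟨ν, φ, hφ, hlim⟩ := CompactSpace.tendsto_subseq νs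
  have : IsProbabilityMeasure ((ν : Measure K).map Subtype.val) :=
    Measure.isProbabilityMeasure_map (by fun_prop)
  refine ⟨(ν : Measure K).map Subtype.val,
    mem_Pp_of_ae_mem_isBounded hp.le hK.isBounded (hemb.ae_map_iff.2 (by simp)), φ, hφ,
    wpTendsto_of_tendsto_wCost hp ?_⟩
  refine tendsto_of_tendsto_of_tendsto_of_le_of_le tendsto_const_nhds
    (tendsto_wCost_of_tendsto hp hlim) (fun _ => zero_le) fun j => ?_
  rw [← hνs]
  exact wCost_map_le_of_isometry isometry_subtype_coe hemb.measurable

lemma wpAdmissible_of_wpRelSeqCompact_image {F : Measure X → Measure X} {m : ℕ}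
    {N : Set (Measure X)} (h : WpRelSeqCompact p x₀ (F^[m] '' N)) : WpAdmissible p x₀ F N := by
  intro μs k hk hmem
  obtain ⟨n₀, hn₀⟩ := eventually_atTop.1 (hk.eventually_ge_atTop m)
  have hend (n : ℕ) : F^[k (n + n₀)] (μs (n + n₀)) ∈ F^[m] '' N :=
    ⟨F^[k (n + n₀) - m] (μs (n + n₀)), hmem _ _ (Nat.sub_le _ _), by
      rw [← Function.iterate_add_apply, Nat.add_sub_cancel' (hn₀ _ (Nat.le_add_left _ _))]⟩
  obtain ⟨μ, hμ, φ, hφ, hlim⟩ := h _ hend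
  exact ⟨μ, hμ, fun j => φ j + n₀, hφ.add_const n₀, hlim⟩

end RelativeCompactness

lemma iterate_measure_map {α : Type*} [MeasurableSpace α] {f : α → α} (hf : Measurable f) (k : ℕ)
    (μ : Measure α) : (fun μ : Measure α => μ.map f)^[k] μ = μ.map f^[k] := by
  induction k with
  | zero => simp
  | succ k ih =>
    rw [Function.iterate_succ_apply', ih, Measure.map_map hf (hf.iterate k),
      Function.iterate_succ']

theorem finite_time_bounded_implies_admissible_general [MetricSpace X] [MeasurableSpace X]
    [BorelSpace X] {p : ℝ} (hp : 0 < p) (x₀ : X) {f : X → X} (hf : Measurable f) {m : ℕ}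
    {K : Set X} (hK : IsCompact K) (hfm : ∀ x, f^[m] x ∈ K) :
    WpRelSeqCompact p x₀
      ((fun μ : Measure X => μ.map f)^[m] '' {μ | IsProbabilityMeasure μ}) ∧
    ∀ N ⊆ {μ : Measure X | IsProbabilityMeasure μ},
      WpAdmissible p x₀ (fun μ : Measure X => μ.map f) N := by
  have himage : (fun μ : Measure X => μ.map f)^[m] '' {μ | IsProbabilityMeasure μ} ⊆
      {μ | IsProbabilityMeasure μ ∧ ∀ᵐ x ∂μ, x ∈ K} := by
    rintro _ ⟨μ, hμ : IsProbabilityMeasure μ, rfl⟩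
    have hfm' : AEMeasurable f^[m] μ := (hf.iterate m).aemeasurable
    rw [iterate_measure_map hf]
    exact ⟨Measure.isProbabilityMeasure_map hfm',
      (ae_map_iff hfm' hK.measurableSet).2 (Eventually.of_forall hfm)⟩
  have hrel := (wpRelSeqCompact_setOf_ae_mem (x₀ := x₀) hp hK).mono himage
  exact ⟨hrel, fun N hN => wpAdmissible_of_wpRelSeqCompact_image (hrel.mono (image_mono hN))⟩

/-- If `f^m(X)` is contained in a closed ball, then `f_*^m(P₁(X))` is relatively compact in
`(P₁(X), w₁)` and every `w₁`-closed subset of `P₁(X)` is `f_*`-admissible. -/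
theorem finite_time_bounded_implies_admissible
    [MetricSpace X] [MeasurableSpace X] [BorelSpace X] [ProperSpace X] [CompleteSpace X]
    [TopologicalSpace.SeparableSpace X] (x₀ : X) (f : X → X) (hf : Continuous f)
    (hmap : ∀ μ ∈ Pp 1 x₀, μ.map f ∈ Pp 1 x₀)
    (hcont : ∀ (μs : ℕ → Measure X) (μ : Measure X), (∀ n, μs n ∈ Pp 1 x₀) → μ ∈ Pp 1 x₀ →
      WpTendsto 1 μs μ → WpTendsto 1 (fun n => (μs n).map f) (μ.map f))
    (m : ℕ) (hm : 0 < m) (R : ℝ) (hR : 0 ≤ R)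
    (hfm : ∀ x : X, f^[m] x ∈ Metric.closedBall x₀ R) :
    (∀ μs : ℕ → Measure X,
        (∀ n, μs n ∈ (fun μ : Measure X => μ.map f)^[m] '' (Pp 1 x₀)) →
        ∃ μ ∈ Pp 1 x₀, ∃ φ : ℕ → ℕ, StrictMono φ ∧ WpTendsto 1 (fun j => μs (φ j)) μ) ∧
    (∀ N : Set (Measure X), WpClosed 1 x₀ N →
        WpAdmissible 1 x₀ (fun μ : Measure X => μ.map f) N) := by
  obtain ⟨hrel, hadm⟩ := finite_time_bounded_implies_admissible_general one_pos x₀ hf.measurable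
    (isCompact_closedBall x₀ R) hfm
  exact ⟨hrel.mono (image_mono fun _ hμ => hμ.1), fun N hN => hadm N fun _ hμ => (hN.1 hμ).1⟩
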